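/- arXiv:1712.03019 — 3 statements merged into one kernel-verified Lean document; each statement's English description precedes it below -/
import Mathlib

section
/- Fix ħ > 0, real numbers k_min < k_max, set L_k = k_max − k_min, Δy = 2π/L_k and y_ζ = ζ·Δy for ζ ∈ ℤ. Let V_loc : ℝ → ℝ and fix x ∈ ℝ such that Σ_{ζ∈ℤ} ( |V_loc(x + y_ζ/2)| + |V_loc(x − y_ζ/2)| ) < ∞. Define the discretized Wigner kernel Ṽ_w(x,k) = (Δy/(2πiħ))·Σ_{ζ∈ℤ} ( V_loc(x + y_ζ/2) − V_loc(x − y_ζ/2) )·e^{−ik y_ζ}. Then for every ν ∈ ℤ and every k ∈ ℝ, ∫_{k_min}^{k_max} Ṽ_w(x, k − k')·exp(2πiν(k' − k_min)/L_k) dk' = ( ( V_loc(x − y_ν/2) − V_loc(x + y_ν/2) )/(iħ) )·exp(2πiν(k − k_min)/L_k). That is, each Fourier mode ψ_ν(k) = exp(2πiν(k − k_min)/L_k) is an eigenfunction of the truncated convolution with the discretized Wigner kernel, with eigenvalue (V_loc(x − y_ν/2) − V_loc(x + y_ν/2))/(iħ). -/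
/-!
Insert the series defining the kernel into the integral. Every term has modulus at most
`|Vloc (x + ζ Dy / 2)| + |Vloc (x - ζ Dy / 2)|`, uniformly in the integration variable, so
dominated convergence (`intervalIntegral.hasSum_integral_of_dominated_convergence`) permits
integration term by term. As `Dy = 2π / Lk`, the `ζ`-th term depends on `k'` only through
`exp (2πi (ζ + ν) k' / Lk)`, whose integral over one period vanishes unless `ζ = -ν`
(`integral_exp_period`). The surviving term carries the factor `Lk`, and `Dy * Lk = 2π` cancels the
normalisation of the kernel.
-/

/-- Orthogonality of the Fourier characters on an interval of one period, not necessarily starting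
at `0`. -/
lemma integral_exp_period (a b : ℝ) (hab : b - a ≠ 0) (n : ℤ) :
    (∫ t in a..b, Complex.exp (2 * (Real.pi : ℂ) * Complex.I * (n : ℂ) / ((b - a : ℝ) : ℂ) *
      (t : ℂ))) = if n = 0 then ((b - a : ℝ) : ℂ) else 0 := by
  have hL : ((b - a : ℝ) : ℂ) ≠ 0 := by exact_mod_cast hab
  split_ifs with hn
  · subst hn
    simp
  · have hn' : (n : ℂ) ≠ 0 := by exact_mod_cast hn
    rw [integral_exp_mul_complex
      (div_ne_zero (mul_ne_zero Complex.two_pi_I_ne_zero hn') hL)]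
    have h : 2 * (Real.pi : ℂ) * Complex.I * (n : ℂ) / ((b - a : ℝ) : ℂ) * (b : ℂ)
        = 2 * (Real.pi : ℂ) * Complex.I * (n : ℂ) / ((b - a : ℝ) : ℂ) * (a : ℂ)
          + (n : ℂ) * (2 * (Real.pi : ℂ) * Complex.I) := by
      field_simp
      push_cast
      ring
    rw [h, Complex.exp_add, Complex.exp_int_mul_two_pi_mul_I]
    simp

open MeasureTheory

/-- **Fourier modes are eigenfunctions of the discretized Wigner kernel convolution.**
Each plane-wave mode `ψ_ν(k) = exp(2πiν(k−k_min)/L_k)` is an eigenfunction of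
the truncated convolution with the discretized Wigner kernel, with eigenvalue
`(V_loc(x − y_ν/2) − V_loc(x + y_ν/2))/(i·hbar)`. -/
theorem discretized_kernel_eigenfunction
    (hbar : ℝ) (hhbar : 0 < hbar)
    (kmin kmax : ℝ) (hk : kmin < kmax)
    (Lk : ℝ) (hLk : Lk = kmax - kmin)
    (Dy : ℝ) (hDy : Dy = 2 * Real.pi / Lk)
    (Vloc : ℝ → ℝ) (x : ℝ)
    (hsum : Summable (fun ζ : ℤ =>
      |Vloc (x + (ζ : ℝ) * Dy / 2)| + |Vloc (x - (ζ : ℝ) * Dy / 2)|))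
    (Vw : ℝ → ℂ)
    (hVw : ∀ k : ℝ, Vw k = ((Dy : ℂ) / (2 * (Real.pi : ℂ) * Complex.I * (hbar : ℂ))) *
      ∑' ζ : ℤ, ((Vloc (x + (ζ : ℝ) * Dy / 2) - Vloc (x - (ζ : ℝ) * Dy / 2) : ℝ) : ℂ) *
        Complex.exp (-(Complex.I * (k : ℂ) * ((ζ : ℝ) * Dy : ℝ)))) :
    ∀ (ν : ℤ) (k : ℝ),
      (∫ k' in kmin..kmax, Vw (k - k') *
          Complex.exp (2 * (Real.pi : ℂ) * Complex.I * (ν : ℂ) *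
            ((k' : ℂ) - (kmin : ℂ)) / (Lk : ℂ))) =
        (((Vloc (x - (ν : ℝ) * Dy / 2) - Vloc (x + (ν : ℝ) * Dy / 2) : ℝ) : ℂ) /
            (Complex.I * (hbar : ℂ))) *
          Complex.exp (2 * (Real.pi : ℂ) * Complex.I * (ν : ℂ) *
            ((k : ℂ) - (kmin : ℂ)) / (Lk : ℂ)) := by
  intro ν k
  have hLpos : 0 < Lk := by linarith
  have hL : (Lk : ℂ) ≠ 0 := by exact_mod_cast hLpos.ne'
  have hpi : (Real.pi : ℂ) ≠ 0 := by exact_mod_cast Real.pi_ne_zero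
  have hh : (hbar : ℂ) ≠ 0 := by exact_mod_cast hhbar.ne'
  have hDyC : (Dy : ℂ) = 2 * (Real.pi : ℂ) / (Lk : ℂ) := by rw [hDy]; push_cast; rfl
  set c : ℤ → ℝ := fun ζ => Vloc (x + (ζ : ℝ) * Dy / 2) - Vloc (x - (ζ : ℝ) * Dy / 2) with hc
  set P : ℂ := (Dy : ℂ) / (2 * (Real.pi : ℂ) * Complex.I * (hbar : ℂ)) with hP
  let F : ℤ → ℝ → ℂ := fun ζ t =>
    (c ζ : ℂ) * Complex.exp (-(Complex.I * ((k - t : ℝ) : ℂ) * ((ζ : ℝ) * Dy : ℝ))) *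
      Complex.exp (2 * (Real.pi : ℂ) * Complex.I * (ν : ℂ) * ((t : ℂ) - (kmin : ℂ)) / (Lk : ℂ))
  have hnorm : ∀ ζ t, ‖F ζ t‖ = |c ζ| := by
    intro ζ t
    have h1 : -(Complex.I * ((k - t : ℝ) : ℂ) * ((ζ : ℝ) * Dy : ℝ))
        = ((-((k - t) * (ζ * Dy)) : ℝ) : ℂ) * Complex.I := by push_cast; ring
    have h2 : 2 * (Real.pi : ℂ) * Complex.I * (ν : ℂ) * ((t : ℂ) - (kmin : ℂ)) / (Lk : ℂ)
        = ((2 * Real.pi * ν * (t - kmin) / Lk : ℝ) : ℂ) * Complex.I := by push_cast; ring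
    simp only [F]
    rw [h1, h2, norm_mul, norm_mul, Complex.norm_exp_ofReal_mul_I, Complex.norm_exp_ofReal_mul_I,
      Complex.norm_real, Real.norm_eq_abs, mul_one, mul_one]
  have hcsum : Summable (fun ζ => |c ζ|) :=
    Summable.of_nonneg_of_le (fun _ => abs_nonneg _) (fun ζ => abs_sub _ _) hsum
  have hFsum : ∀ t, Summable (fun ζ => F ζ t) := fun t =>
    Summable.of_norm (by simpa only [hnorm] using hcsum)
  have hswap : HasSum (fun ζ => ∫ t in kmin..kmax, F ζ t) (∫ t in kmin..kmax, ∑' ζ, F ζ t) := by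
    refine intervalIntegral.hasSum_integral_of_dominated_convergence (fun ζ _ => |c ζ|)
      (fun ζ => ?_) (fun ζ => ?_) ?_ ?_ ?_
    · exact Continuous.aestronglyMeasurable (by fun_prop)
    · exact Filter.Eventually.of_forall fun t _ => (hnorm ζ t).le
    · exact Filter.Eventually.of_forall fun t _ => hcsum
    · exact intervalIntegrable_const
    · exact Filter.Eventually.of_forall fun t _ => (hFsum t).hasSum
  have hterm : ∀ ζ, (∫ t in kmin..kmax, F ζ t) =
      (c ζ : ℂ) * Complex.exp (-(Complex.I * (k : ℂ) * ((ζ : ℂ) * Dy))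
        - 2 * (Real.pi : ℂ) * Complex.I * (ν : ℂ) * (kmin : ℂ) / (Lk : ℂ)) *
        (if ζ + ν = 0 then (Lk : ℂ) else 0) := by
    intro ζ
    have h := integral_exp_period kmin kmax (by linarith) (ζ + ν)
    rw [← hLk] at h
    rw [← h, ← intervalIntegral.integral_const_mul]
    refine intervalIntegral.integral_congr fun t _ => ?_
    simp only [F]
    rw [mul_assoc (c ζ : ℂ), mul_assoc (c ζ : ℂ), ← Complex.exp_add, ← Complex.exp_add]
    congr 2
    push_cast
    rw [hDyC]
    ring
  have hval : (∫ t in kmin..kmax, ∑' ζ, F ζ t) =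
      (c (-ν) : ℂ) * Complex.exp (2 * (Real.pi : ℂ) * Complex.I * (ν : ℂ) *
            ((k : ℂ) - (kmin : ℂ)) / (Lk : ℂ)) * (Lk : ℂ) := by
    rw [← hswap.tsum_eq, tsum_eq_single (-ν), hterm, if_pos (by ring)]
    · congr 3
      push_cast
      rw [hDyC]
      ring
    · intro ζ hζ
      rw [hterm, if_neg (fun h => hζ (by lia)), mul_zero]
  have hint : ∀ t : ℝ, Vw (k - t) * Complex.exp (2 * (Real.pi : ℂ) * Complex.I * (ν : ℂ) *
      ((t : ℂ) - (kmin : ℂ)) / (Lk : ℂ)) = P * ∑' ζ, F ζ t := by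
    intro t
    rw [hVw, mul_assoc, ← tsum_mul_right]
  simp_rw [hint]
  rw [intervalIntegral.integral_const_mul, hval]
  have hcν : c (-ν) = Vloc (x - (ν : ℝ) * Dy / 2) - Vloc (x + (ν : ℝ) * Dy / 2) := by
    simp only [hc]
    push_cast
    congr 2 <;> ring
  rw [hcν, hP, hDyC]
  field_simp
end

section
/- Let ħ > 0, let V_loc : ℝ → ℝ be a Schwartz function, fix Δy > 0 and set y_ζ = ζ·Δy for ζ ∈ ℤ. Define the Wigner kernel V_w(x,k) = (1/(2πiħ))·∫_ℝ e^{−iky}·( V_loc(x + y/2) − V_loc(x − y/2) ) dy. Then for all x, k ∈ ℝ, Σ_{n∈ℤ} V_w(x, k + 2πn/Δy) = (Δy/(2πiħ))·Σ_{ζ∈ℤ} ( V_loc(x + y_ζ/2) − V_loc(x − y_ζ/2) )·e^{−ik y_ζ}, where both series converge absolutely (Poisson summation formula for the Wigner kernel). -/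
open MeasureTheory

/-!
For fixed `x`, put `F t = V (x + t Δy / 2) - V (x - t Δy / 2)`, the Wigner integrand rescaled so
that the grid `y_ζ = ζ Δy` becomes `ℤ`. It is a Schwartz function (`wignerDiff`), and the
substitution `y = t Δy` shows (`integral_exp_mul_wignerDiff`) that, up to the prefactor,
`V_w (x, k + 2πn/Δy)` is `Δy • 𝓕 F (a + n)` with `a = k Δy / (2π)`.

The claim thus reads `∑ 𝓕 F (a + n) = ∑ F n * exp (-2πi n a)`. Applying Poisson summation to the
Schwartz function `𝓕 F` (rather than to a modulated `F`) gives this after Fourier inversion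
`𝓕 (𝓕 F) n = F (-n)` and `n ↦ -n`. Both series converge absolutely because Schwartz functions,
translated or not, are summable over `ℤ`.
-/

open scoped SchwartzMap FourierTransform

theorem schwartz_summable_int (f : 𝓢(ℝ, ℂ)) : Summable fun n : ℤ => ‖f n‖ :=
  (summable_of_isBigO (Real.summable_abs_int_rpow one_lt_two)
    ((f.isBigO_cocompact_rpow (-2)).comp_tendsto Int.tendsto_coe_cofinite)).norm

theorem schwartz_summable_int_translate (f : 𝓢(ℝ, ℂ)) (a : ℝ) :
    Summable fun n : ℤ => ‖f (a + n)‖ := by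
  have h := schwartz_summable_int (f.compSubConstCLM ℂ (-a))
  simpa [SchwartzMap.compSubConstCLM_apply, add_comm] using h

/-- Poisson summation in the form dual to `SchwartzMap.tsum_eq_tsum_fourier`: the periodization of
the Fourier transform is the Fourier series with coefficients `f n`. -/
theorem schwartz_tsum_fourier_translate (f : 𝓢(ℝ, ℂ)) (a : ℝ) :
    ∑' n : ℤ, 𝓕 f (a + n) = ∑' n : ℤ, f n * Complex.exp (-(2 * Real.pi * Complex.I * n * a)) := by
  rw [SchwartzMap.tsum_eq_tsum_fourier (𝓕 f) a, ← (Equiv.neg ℤ).tsum_eq]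
  refine tsum_congr fun n => ?_
  have h : 𝓕 (𝓕 f) (-(n : ℝ)) = f n := by
    have h1 : 𝓕⁻ (𝓕 f) (n : ℝ) = f n := by rw [FourierTransform.fourierInv_fourier_eq]
    rw [← h1, SchwartzMap.fourierInv_apply_eq]
    rfl
  rw [Equiv.neg_apply, Int.cast_neg, h, fourier_coe_apply]
  congr 2
  push_cast
  ring

/-- Multiplication by a nonzero real `c`, as a continuous linear equivalence of `ℝ`. -/
noncomputable def scaleEquiv (c : ℝ) (hc : c ≠ 0) : ℝ ≃L[ℝ] ℝ :=
  ContinuousLinearEquiv.unitsEquivAut ℝ (Units.mk0 c hc)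

/-- The Schwartz function `t ↦ V (x + t D / 2) - V (x - t D / 2)`, with complex values. -/
noncomputable def wignerDiff (V : 𝓢(ℝ, ℝ)) (x D : ℝ) (hD : D ≠ 0) : 𝓢(ℝ, ℂ) :=
  SchwartzMap.postcompCLM (𝕜 := ℝ) Complex.ofRealCLM
    (SchwartzMap.compCLMOfContinuousLinearEquiv ℝ (scaleEquiv (D / 2) (by simpa using hD))
        (V.compSubConstCLM ℝ (-x)) -
      SchwartzMap.compCLMOfContinuousLinearEquiv ℝ (scaleEquiv (-(D / 2)) (by simpa using hD))
        (V.compSubConstCLM ℝ (-x)))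

theorem wignerDiff_apply (V : 𝓢(ℝ, ℝ)) (x D : ℝ) (hD : D ≠ 0) (t : ℝ) :
    wignerDiff V x D hD t = ((V (x + t * D / 2) - V (x - t * D / 2) : ℝ) : ℂ) := by
  have h1 : t * (D / 2) - -x = x + t * D / 2 := by ring
  have h2 : t * (-(D / 2)) - -x = x - t * D / 2 := by ring
  rw [← h1, ← h2]
  rfl

theorem integral_exp_mul_wignerDiff (V : 𝓢(ℝ, ℝ)) (x k D : ℝ) (hD : 0 < D) :
    ∫ y : ℝ, Complex.exp (-(Complex.I * (k : ℂ) * (y : ℂ))) *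
        ((V (x + y / 2) - V (x - y / 2) : ℝ) : ℂ) =
      D * 𝓕 (wignerDiff V x D hD.ne') (k * D / (2 * Real.pi)) := by
  have h := Measure.integral_comp_mul_right (fun y : ℝ =>
    Complex.exp (-(Complex.I * (k : ℂ) * (y : ℂ))) * ((V (x + y / 2) - V (x - y / 2) : ℝ) : ℂ)) D
  have hDc : (D : ℂ) ≠ 0 := by exact_mod_cast hD.ne'
  have hpi : (Real.pi : ℂ) ≠ 0 := by exact_mod_cast Real.pi_ne_zero
  rw [abs_of_pos (inv_pos.2 hD), Complex.real_smul, Complex.ofReal_inv] at h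
  rw [SchwartzMap.fourier_coe, Real.fourier_real_eq_integral_exp_smul,
    ← mul_inv_cancel_left₀ hDc (∫ y : ℝ, _), ← h]
  congr 1
  refine integral_congr_ae (Filter.Eventually.of_forall fun t => ?_)
  simp only [smul_eq_mul, wignerDiff_apply]
  congr 2
  push_cast
  field_simp

/-- **Poisson summation formula for the Wigner kernel.**
For a Schwartz localized potential, the periodization of the Wigner kernel in
`k` equals the discretized Wigner kernel, and both series converge absolutely. -/
theorem poisson_summation_wigner_kernel
    (hbar : ℝ) (hhbar : 0 < hbar)
    (Vloc : SchwartzMap ℝ ℝ)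
    (Dy : ℝ) (hDy : 0 < Dy)
    (Vw : ℝ → ℝ → ℂ)
    (hVw : ∀ x k : ℝ, Vw x k = (1 / (2 * (Real.pi : ℂ) * Complex.I * (hbar : ℂ))) *
      ∫ y : ℝ, Complex.exp (-(Complex.I * (k : ℂ) * (y : ℂ))) *
        ((Vloc (x + y / 2) - Vloc (x - y / 2) : ℝ) : ℂ)) :
    ∀ x k : ℝ,
      Summable (fun n : ℤ => ‖Vw x (k + 2 * Real.pi * (n : ℝ) / Dy)‖) ∧
      Summable (fun ζ : ℤ =>
        ‖((Vloc (x + (ζ : ℝ) * Dy / 2) - Vloc (x - (ζ : ℝ) * Dy / 2) : ℝ) : ℂ) *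
          Complex.exp (-(Complex.I * (k : ℂ) * (((ζ : ℝ) * Dy : ℝ) : ℂ)))‖) ∧
      (∑' n : ℤ, Vw x (k + 2 * Real.pi * (n : ℝ) / Dy)) =
        ((Dy : ℂ) / (2 * (Real.pi : ℂ) * Complex.I * (hbar : ℂ))) *
          ∑' ζ : ℤ, ((Vloc (x + (ζ : ℝ) * Dy / 2) - Vloc (x - (ζ : ℝ) * Dy / 2) : ℝ) : ℂ) *
            Complex.exp (-(Complex.I * (k : ℂ) * (((ζ : ℝ) * Dy : ℝ) : ℂ))) := by
  intro x k
  set F := wignerDiff Vloc x Dy hDy.ne' with hF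
  set a : ℝ := k * Dy / (2 * Real.pi) with ha
  set c : ℂ := 1 / (2 * (Real.pi : ℂ) * Complex.I * (hbar : ℂ)) with hc
  have hpi : (Real.pi : ℂ) ≠ 0 := by exact_mod_cast Real.pi_ne_zero
  have hV : ∀ n : ℤ, Vw x (k + 2 * Real.pi * (n : ℝ) / Dy) = c * Dy * 𝓕 F (a + n) := by
    intro n
    have hn : (k + 2 * Real.pi * (n : ℝ) / Dy) * Dy / (2 * Real.pi) = a + n := by
      rw [ha]
      field_simp
    rw [hVw, integral_exp_mul_wignerDiff Vloc x _ Dy hDy, hn, ← mul_assoc]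
  have hS : ∀ ζ : ℤ, ((Vloc (x + (ζ : ℝ) * Dy / 2) - Vloc (x - (ζ : ℝ) * Dy / 2) : ℝ) : ℂ) *
      Complex.exp (-(Complex.I * (k : ℂ) * (((ζ : ℝ) * Dy : ℝ) : ℂ))) =
      F ζ * Complex.exp (-(2 * Real.pi * Complex.I * ζ * a)) := by
    intro ζ
    rw [hF, wignerDiff_apply, ha]
    congr 2
    push_cast
    field_simp
  simp only [hV, hS]
  refine ⟨?_, ?_, ?_⟩
  · simpa only [norm_mul] using (schwartz_summable_int_translate (𝓕 F) a).mul_left ‖c * (Dy : ℂ)‖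
  · refine (schwartz_summable_int F).congr fun ζ => ?_
    -- The phase `exp (-2πi ζ a)` has purely imaginary exponent, hence modulus one.
    have h : ‖Complex.exp (-(2 * Real.pi * Complex.I * ζ * a))‖ = 1 := by
      simp [Complex.norm_exp]
    rw [norm_mul, h, mul_one]
  · rw [tsum_mul_left, schwartz_tsum_fourier_translate, hc, one_div_mul_eq_div]
end

section
/- For all real x ≠ 0 and k ≠ 0, the Wigner transform of the Pöschl–Teller ground state φ(x) = (√2/2)·sech(x) evaluates to (1/(2π))·∫_ℝ e^{−iky}·(1/2)·sech(x + y/2)·sech(x − y/2) dy = sin(2xk) / ( sinh(2x)·sinh(πk) ). Equivalently, ∫_ℝ e^{−iky}·sech(x + y/2)·sech(x − y/2) dy = 4π·sin(2xk) / ( sinh(2x)·sinh(πk) ). -/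
/-!
Put `a = 2x` and let `s` be the sigmoid function, with derivative `w = s (1 - s)`. The product of the two
hyperbolic secants is a difference of translates of `s`:
`sinh a · sech (x + y/2) · sech (x - y/2) = 2 (s (y + a) - s (y - a))`
(`sigmoid_sub_sigmoid`). An integration by parts therefore reduces the claim to the Fourier
transform of `w`, the two translations contributing the factor
`(exp (ika) - exp (-ika)) / (ik) = 2 sin (ka) / k`.

The Fourier transform of `w` is a Beta integral: with `t = s y` one has
`exp (-iky) = t ^ (-ik) (1 - t) ^ (ik)`, so it equals
`B(1 - ik, 1 + ik) = Γ(1 - ik) Γ(1 + ik) = πk / sinh (πk)` by the reflection formula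
(`integral_exp_mul_deriv_sigmoid`). All integrability needed comes from that of `w`.
-/

open MeasureTheory Real

namespace WignerPT

/-- The derivative `s (1 - s)` of the sigmoid function `s`. -/
noncomputable def w (y : ℝ) : ℝ := sigmoid y * (1 - sigmoid y)

lemma w_pos (y : ℝ) : 0 < w y :=
  mul_pos (sigmoid_pos y) (sub_pos.2 (sigmoid_lt_one y))

lemma continuous_w : Continuous w := by
  unfold w
  fun_prop

lemma integrable_w : Integrable w := by
  have h := integrableOn_image_iff_integrableOn_abs_deriv_smul (s := Set.univ) (f := sigmoid)
    (f' := w) MeasurableSet.univ (fun x _ => (hasDerivAt_sigmoid x).hasDerivWithinAt)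
    sigmoid_injective.injOn (fun _ => (1 : ℝ))
  rw [Set.image_univ, range_sigmoid, integrableOn_univ] at h
  have h1 : IntegrableOn (fun _ : ℝ => (1 : ℝ)) (Set.Ioo 0 1) :=
    integrableOn_const (by simp)
  refine (h.1 h1).congr (Filter.Eventually.of_forall fun y => ?_)
  simp [abs_of_pos (w_pos y)]

lemma integrable_exp_mul (k : ℝ) {g : ℝ → ℝ} (hg : Integrable g) :
    Integrable (fun y : ℝ => Complex.exp (-(Complex.I * k * y)) * (g y : ℂ)) := by
  refine hg.ofReal.bdd_mul (c := 1) (Continuous.aestronglyMeasurable (by fun_prop))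
    (Filter.Eventually.of_forall fun y => ?_)
  simp [Complex.norm_exp]

/-- The substitution `t = sigmoid y` turns the kernel of the Beta integral into `exp (-iky)`. -/
lemma cpow_sigmoid (k y : ℝ) :
    ((sigmoid y : ℝ) : ℂ) ^ ((1 - Complex.I * k) - 1) *
      (1 - ((sigmoid y : ℝ) : ℂ)) ^ ((1 + Complex.I * k) - 1) =
      Complex.exp (-(Complex.I * k * y)) := by
  have h0 : 0 < sigmoid y := sigmoid_pos y
  have h1 : 0 < sigmoid (-y) := sigmoid_pos (-y)
  have h2 : (1 - ((sigmoid y : ℝ) : ℂ)) = ((sigmoid (-y) : ℝ) : ℂ) := by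
    rw [sigmoid_neg]; push_cast; ring
  have h3 : Real.log (sigmoid (-y)) = Real.log (sigmoid y) - y := by
    rw [← sigmoid_mul_rexp_neg, Real.log_mul h0.ne' (Real.exp_pos _).ne', Real.log_exp]; ring
  rw [h2, Complex.cpow_def_of_ne_zero (by exact_mod_cast h0.ne'),
    Complex.cpow_def_of_ne_zero (by exact_mod_cast h1.ne'), ← Complex.exp_add,
    ← Complex.ofReal_log h0.le, ← Complex.ofReal_log h1.le, h3]
  congr 1
  push_cast
  ring

lemma betaIntegral_eq (k : ℝ) (hk : k ≠ 0) :
    Complex.betaIntegral (1 - Complex.I * k) (1 + Complex.I * k) =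
      ((Real.pi * k / Real.sinh (Real.pi * k) : ℝ) : ℂ) := by
  have hik : Complex.I * (k : ℂ) ≠ 0 :=
    mul_ne_zero Complex.I_ne_zero (by exact_mod_cast hk)
  have h := Complex.Gamma_mul_Gamma_eq_betaIntegral (s := 1 - Complex.I * k)
    (t := 1 + Complex.I * k) (by simp) (by simp)
  have h2 : (1 - Complex.I * k + (1 + Complex.I * k) : ℂ) = 1 + 1 := by ring
  rw [h2, Complex.Gamma_add_one 1 one_ne_zero, Complex.Gamma_one, one_mul, one_mul,
    add_comm (1 : ℂ) (Complex.I * k), Complex.Gamma_add_one _ hik] at h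
  have h3 := Complex.Gamma_mul_Gamma_one_sub (Complex.I * k)
  have h4 : Complex.sin (Real.pi * (Complex.I * k)) =
      Complex.sinh (Real.pi * k) * Complex.I := by
    rw [← Complex.sin_mul_I]; congr 1; ring
  rw [h4] at h3
  have h5 : Complex.sinh (Real.pi * k) ≠ 0 := by
    rw [← Complex.ofReal_mul, ← Complex.ofReal_sinh]
    exact_mod_cast mt Real.sinh_eq_zero.1 (mul_ne_zero Real.pi_ne_zero hk)
  rw [add_comm (1 : ℂ), ← h]
  calc _ = Complex.I * k * (Complex.Gamma (Complex.I * k) *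
            Complex.Gamma (1 - Complex.I * k)) := by ring
    _ = _ := by
      rw [h3]
      push_cast
      field_simp

/-- The Fourier transform of the derivative of the sigmoid function. -/
lemma integral_exp_mul_deriv_sigmoid (k : ℝ) (hk : k ≠ 0) :
    ∫ y : ℝ, Complex.exp (-(Complex.I * k * y)) * (w y : ℂ) =
      ((Real.pi * k / Real.sinh (Real.pi * k) : ℝ) : ℂ) := by
  have h := integral_image_eq_integral_abs_deriv_smul (s := Set.univ) (f := sigmoid)
    (f' := w) MeasurableSet.univ (fun x _ => (hasDerivAt_sigmoid x).hasDerivWithinAt)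
    sigmoid_injective.injOn (fun t : ℝ => (t : ℂ) ^ ((1 - Complex.I * k) - 1) *
      (1 - (t : ℂ)) ^ ((1 + Complex.I * k) - 1))
  rw [Set.image_univ, range_sigmoid, ← integral_Ioc_eq_integral_Ioo,
    ← intervalIntegral.integral_of_le zero_le_one, setIntegral_univ] at h
  rw [← betaIntegral_eq k hk, Complex.betaIntegral, h]
  refine integral_congr_ae (Filter.Eventually.of_forall fun y => ?_)
  simp only [cpow_sigmoid, abs_of_pos (w_pos y), Complex.real_smul]
  ring

lemma integral_exp_mul_w_add (k : ℝ) (hk : k ≠ 0) (a : ℝ) :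
    ∫ y : ℝ, Complex.exp (-(Complex.I * k * y)) * (w (y + a) : ℂ) =
      Complex.exp (Complex.I * k * a) *
        ((Real.pi * k / Real.sinh (Real.pi * k) : ℝ) : ℂ) := by
  rw [← integral_exp_mul_deriv_sigmoid k hk, ← integral_const_mul,
    ← integral_add_right_eq_self (fun y : ℝ => Complex.exp (Complex.I * k * a) *
      (Complex.exp (-(Complex.I * k * y)) * (w y : ℂ))) a]
  refine integral_congr_ae (Filter.Eventually.of_forall fun y => ?_)
  simp only [← mul_assoc, ← Complex.exp_add]
  congr 2
  push_cast
  ring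

lemma sigmoid_two_mul (u : ℝ) : sigmoid (2 * u) = Real.exp u / (2 * Real.cosh u) := by
  rw [sigmoid_def, Real.cosh_eq, show -(2 * u) = -u + -u by ring, Real.exp_add, Real.exp_neg]
  have := Real.exp_pos u
  field_simp

lemma w_two_mul (u : ℝ) : w (2 * u) = (1 / Real.cosh u) ^ 2 / 4 := by
  rw [w, ← sigmoid_neg, ← mul_neg, sigmoid_two_mul, sigmoid_two_mul, Real.cosh_neg, Real.exp_neg]
  have := Real.exp_pos u
  have := Real.cosh_pos u
  field_simp
  norm_num

/-- The difference of the values of the sigmoid at `y + 2x` and `y - 2x` is, up to a constant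
factor, the product of the ground states at `x + y / 2` and `x - y / 2`. -/
lemma sigmoid_sub_sigmoid (x y : ℝ) :
    sigmoid (y + 2 * x) - sigmoid (y + -(2 * x)) =
      Real.sinh (2 * x) / 2 * (1 / Real.cosh (x + y / 2) * (1 / Real.cosh (x - y / 2))) := by
  have hu := Real.cosh_pos (x + y / 2)
  have hv := Real.cosh_pos (x - y / 2)
  rw [show y + 2 * x = 2 * (x + y / 2) by ring, show y + -(2 * x) = 2 * -(x - y / 2) by ring,
    show 2 * x = (x + y / 2) + (x - y / 2) by ring, sigmoid_two_mul, sigmoid_two_mul,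
    Real.cosh_neg, ← Real.cosh_sub_sinh (x - y / 2), ← Real.cosh_add_sinh (x + y / 2),
    Real.sinh_add (x + y / 2) (x - y / 2)]
  generalize Real.cosh (x + y / 2) = c at *
  generalize Real.cosh (x - y / 2) = d at *
  field_simp
  ring

lemma integrable_sech_mul_sech (x : ℝ) :
    Integrable (fun y : ℝ => 1 / Real.cosh (x + y / 2) * (1 / Real.cosh (x - y / 2))) := by
  have hb : Integrable (fun y : ℝ => 2 * (w (y + 2 * x) + w (y + -(2 * x)))) :=
    ((integrable_w.comp_add_right _).add (integrable_w.comp_add_right _)).const_mul 2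
  refine hb.mono' (Continuous.aestronglyMeasurable ?_) (Filter.Eventually.of_forall fun y => ?_)
  · have h1 : ∀ y : ℝ, Real.cosh (x + y / 2) ≠ 0 := fun y => (Real.cosh_pos _).ne'
    have h2 : ∀ y : ℝ, Real.cosh (x - y / 2) ≠ 0 := fun y => (Real.cosh_pos _).ne'
    fun_prop (disch := assumption)
  · have hu := Real.cosh_pos (x + y / 2)
    have hv := Real.cosh_pos (x - y / 2)
    rw [Real.norm_of_nonneg (by positivity), show y + 2 * x = 2 * (x + y / 2) by ring,
      show y + -(2 * x) = 2 * -(x - y / 2) by ring, w_two_mul, w_two_mul, Real.cosh_neg]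
    nlinarith [sq_nonneg (1 / Real.cosh (x + y / 2) - 1 / Real.cosh (x - y / 2))]

/-- Integration by parts, the boundary terms vanishing by integrability. -/
lemma integral_exp_mul_sigmoid_sub (x k : ℝ) (hk : k ≠ 0) :
    Complex.I * k * ∫ y : ℝ, Complex.exp (-(Complex.I * k * y)) *
        ((sigmoid (y + 2 * x) - sigmoid (y + -(2 * x)) : ℝ) : ℂ) =
      (Complex.exp (Complex.I * k * (2 * x : ℝ)) - Complex.exp (Complex.I * k * (-(2 * x) : ℝ))) *
        ((Real.pi * k / Real.sinh (Real.pi * k) : ℝ) : ℂ) := by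
  have hD : Integrable (fun y : ℝ => sigmoid (y + 2 * x) - sigmoid (y + -(2 * x))) := by
    simp only [sigmoid_sub_sigmoid]
    exact (integrable_sech_mul_sech x).const_mul _
  have hA := integrable_exp_mul k hD
  have hp := integrable_exp_mul k (integrable_w.comp_add_right (2 * x))
  have hm := integrable_exp_mul k (integrable_w.comp_add_right (-(2 * x)))
  have hderiv : ∀ y : ℝ, HasDerivAt (fun y : ℝ => Complex.exp (-(Complex.I * k * y)) *
        ((sigmoid (y + 2 * x) - sigmoid (y + -(2 * x)) : ℝ) : ℂ))
      ((Complex.exp (-(Complex.I * k * y)) * (w (y + 2 * x) : ℂ) -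
        Complex.exp (-(Complex.I * k * y)) * (w (y + -(2 * x)) : ℂ)) -
        Complex.I * k * (Complex.exp (-(Complex.I * k * y)) *
        ((sigmoid (y + 2 * x) - sigmoid (y + -(2 * x)) : ℝ) : ℂ))) y := by
    intro y
    have h1 : HasDerivAt (fun y : ℝ => Complex.exp (-(Complex.I * k * y)))
        (Complex.exp (-(Complex.I * k * y)) * -(Complex.I * k * 1)) y :=
      (((hasDerivAt_id y).ofReal_comp.const_mul (Complex.I * (k : ℂ))).neg).cexp
    have h2 : HasDerivAt (fun y : ℝ => sigmoid (y + 2 * x) - sigmoid (y + -(2 * x)))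
        (w (y + 2 * x) - w (y + -(2 * x))) y :=
      ((hasDerivAt_sigmoid _).comp_add_const y (2 * x)).sub
        ((hasDerivAt_sigmoid _).comp_add_const y (-(2 * x)))
    convert! h1.mul h2.ofReal_comp using 1
    push_cast
    ring
  have hpm : Integrable (fun y : ℝ => Complex.exp (-(Complex.I * k * y)) * (w (y + 2 * x) : ℂ) -
      Complex.exp (-(Complex.I * k * y)) * (w (y + -(2 * x)) : ℂ)) := hp.sub hm
  have h := integral_eq_zero_of_hasDerivAt_of_integrable hderiv
    (hpm.sub (hA.const_mul _)) hA
  rw [integral_sub hpm (hA.const_mul _), integral_sub hp hm, integral_const_mul,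
    integral_exp_mul_w_add k hk, integral_exp_mul_w_add k hk] at h
  rw [sub_mul]
  exact (sub_eq_zero.1 h).symm

lemma integral_exp_mul_sech_mul_sech (x k : ℝ) (hx : x ≠ 0) (hk : k ≠ 0) :
    (∫ y : ℝ, Complex.exp (-(Complex.I * (k : ℂ) * (y : ℂ))) *
        ((1 / Real.cosh (x + y / 2) : ℝ) : ℂ) * ((1 / Real.cosh (x - y / 2) : ℝ) : ℂ)) =
      ((4 * Real.pi * Real.sin (2 * x * k) /
          (Real.sinh (2 * x) * Real.sinh (Real.pi * k)) : ℝ) : ℂ) := by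
  have h := integral_exp_mul_sigmoid_sub x k hk
  have hs : Complex.sinh (2 * x) ≠ 0 := by
    exact_mod_cast mt Real.sinh_eq_zero.1 (mul_ne_zero two_ne_zero hx)
  have hsk : Complex.sinh (Real.pi * k) ≠ 0 := by
    exact_mod_cast mt Real.sinh_eq_zero.1 (mul_ne_zero Real.pi_ne_zero hk)
  have hkc : (k : ℂ) ≠ 0 := by exact_mod_cast hk
  have e : ∀ y : ℝ, Complex.exp (-(Complex.I * k * y)) *
        ((sigmoid (y + 2 * x) - sigmoid (y + -(2 * x)) : ℝ) : ℂ) =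
      ((Real.sinh (2 * x) / 2 : ℝ) : ℂ) * (Complex.exp (-(Complex.I * (k : ℂ) * (y : ℂ))) *
        ((1 / Real.cosh (x + y / 2) : ℝ) : ℂ) * ((1 / Real.cosh (x - y / 2) : ℝ) : ℂ)) := by
    intro y
    rw [sigmoid_sub_sigmoid, Complex.ofReal_mul, Complex.ofReal_mul]
    ring
  simp_rw [e] at h
  rw [integral_const_mul] at h
  have hsin : Complex.exp (Complex.I * k * (2 * x : ℝ)) -
      Complex.exp (Complex.I * k * (-(2 * x) : ℝ)) =
      2 * Complex.I * Complex.sin (2 * x * k) := by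
    rw [Complex.sin, show Complex.I * k * ((2 * x : ℝ) : ℂ) = 2 * x * k * Complex.I by
      push_cast; ring, show Complex.I * k * ((-(2 * x) : ℝ) : ℂ) = -(2 * x * k) * Complex.I by
      push_cast; ring]
    linear_combination (Complex.exp (2 * x * k * Complex.I) -
      Complex.exp (-(2 * x * k) * Complex.I)) * Complex.I_sq
  rw [hsin] at h
  generalize (∫ y : ℝ, Complex.exp (-(Complex.I * (k : ℂ) * (y : ℂ))) *
        ((1 / Real.cosh (x + y / 2) : ℝ) : ℂ) * ((1 / Real.cosh (x - y / 2) : ℝ) : ℂ)) = J at h ⊢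
  push_cast at h ⊢
  rw [eq_div_iff (mul_ne_zero hs hsk)]
  apply mul_left_cancel₀ (mul_ne_zero Complex.I_ne_zero hkc)
  generalize Complex.sinh (Real.pi * k) = S at *
  generalize Complex.sin (2 * x * k) = T at *
  field_simp at h
  linear_combination Complex.I * k * h

end WignerPT

/-- **The Wigner function of the Pöschl–Teller ground state.**
For `x ≠ 0` and `k ≠ 0`, the Wigner transform of `φ(x) = (√2/2)·sech(x)`
equals `sin(2xk)/(sinh(2x)·sinh(πk))`; equivalently,
`∫ e^{−iky} sech(x+y/2) sech(x−y/2) dy = 4π·sin(2xk)/(sinh(2x)·sinh(πk))`. -/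
theorem wigner_poschl_teller_ground_state
    (x k : ℝ) (hx : x ≠ 0) (hk : k ≠ 0) :
    ((1 / (2 * (Real.pi : ℂ))) *
        ∫ y : ℝ, Complex.exp (-(Complex.I * (k : ℂ) * (y : ℂ))) *
          ((1 / 2 : ℝ) : ℂ) * ((1 / Real.cosh (x + y / 2) : ℝ) : ℂ) *
          ((1 / Real.cosh (x - y / 2) : ℝ) : ℂ)) =
      ((Real.sin (2 * x * k) / (Real.sinh (2 * x) * Real.sinh (Real.pi * k)) : ℝ) : ℂ) ∧
    (∫ y : ℝ, Complex.exp (-(Complex.I * (k : ℂ) * (y : ℂ))) *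
        ((1 / Real.cosh (x + y / 2) : ℝ) : ℂ) * ((1 / Real.cosh (x - y / 2) : ℝ) : ℂ)) =
      ((4 * Real.pi * Real.sin (2 * x * k) /
          (Real.sinh (2 * x) * Real.sinh (Real.pi * k)) : ℝ) : ℂ) := by
  have h := WignerPT.integral_exp_mul_sech_mul_sech x k hx hk
  refine ⟨?_, h⟩
  have e : ∀ y : ℝ, Complex.exp (-(Complex.I * (k : ℂ) * (y : ℂ))) *
          ((1 / 2 : ℝ) : ℂ) * ((1 / Real.cosh (x + y / 2) : ℝ) : ℂ) *
          ((1 / Real.cosh (x - y / 2) : ℝ) : ℂ) =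
      ((1 / 2 : ℝ) : ℂ) * (Complex.exp (-(Complex.I * (k : ℂ) * (y : ℂ))) *
        ((1 / Real.cosh (x + y / 2) : ℝ) : ℂ) * ((1 / Real.cosh (x - y / 2) : ℝ) : ℂ)) := by
    intro y; ring
  simp_rw [e]
  rw [integral_const_mul, h]
  have hpi : (Real.pi : ℂ) ≠ 0 := by exact_mod_cast Real.pi_ne_zero
  push_cast
  field_simp
  norm_num
end
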